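/- arXiv:2508.18832 — 2 statements merged into one kernel-verified Lean document; each statement's English description precedes it below -/
import Mathlib

section
/- For every $b > 0$ and every $\alpha \in [0,1]$, $\frac{2}{b} - \log\big(1 - \alpha + \alpha\,e^{2/b}\big) \;\leq\; \frac{2(1-\alpha)}{b} + \frac{2\alpha^2}{b^2}$. -/
/-- the tight PML bound is at most the simplified closed-form bound. -/
theorem leakage_bound_simplified (b α : ℝ) (hb : 0 < b) (hα0 : 0 ≤ α) (hα1 : α ≤ 1) :
    2 / b - Real.log (1 - α + α * Real.exp (2 / b)) ≤
      2 * (1 - α) / b + 2 * α ^ 2 / b ^ 2 := by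
  have h := convexOn_exp.2 (Set.mem_univ (0 : ℝ)) (Set.mem_univ (2 / b))
    (sub_nonneg.2 hα1) hα0 (by ring)
  simp only [smul_eq_mul, mul_zero, zero_add, Real.exp_zero, mul_one] at h
  have h2 : α * (2 / b) ≤ Real.log (1 - α + α * Real.exp (2 / b)) :=
    (Real.le_log_iff_exp_le (lt_of_lt_of_le (Real.exp_pos _) h)).2 h
  have h3 : 0 ≤ 2 * α ^ 2 / b ^ 2 := by positivity
  have h4 : 2 * (1 - α) / b = 2 / b - α * (2 / b) := by ring
  linarith
end

section
/- Let $\mathcal{D}$ be a finite set, $k \geq 2$, and $h_1,\dots,h_k : \mathcal{D} \to \{0,1\}$ with $\sum_{j=1}^k h_j(d) = 1$ for all $d \in \mathcal{D}$. Let $b > 0$ and $\alpha \in (0, 1/k]$. Let $D_1$ be a $\mathcal{D}$-valued random variable with $\Pr(h_1(D_1) = 1) = \alpha$ and $\Pr(h_j(D_1)=1) > 0$ for all $j$, and consider the single-record ($n = 1$) Laplace histogram mechanism with conditional density $q(y^k \mid d) = \prod_{j=1}^k \tfrac{1}{2b}\exp\big(-\tfrac{1}{b}|y_j - h_j(d)|\big)$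 and marginal density $q(y^k) = \mathbb{E}\big[q(y^k \mid D_1)\big]$. Then for every $y^k \in \mathbb{R}^k$ with $y_1 \geq 1$ and $y_j \leq 0$ for all $j \in \{2,\dots,k\}$, and every $d \in \mathcal{D}$ with $h_1(d) = 1$, $\frac{q(y^k \mid d)}{q(y^k)} \;=\; \frac{\exp(2/b)}{1 - \alpha + \alpha\exp(2/b)}$. In particular the upper bound $\frac{2}{b} - \log\big(1 - \alpha + \alpha e^{2/b}\big)$ on the pointwise maximal leakage is attained. -/
open MeasureTheory

/-- tightness of the PML bound for the single-record (`n = 1`)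
Laplace histogram mechanism. If `P(h₁(D₁) = 1) = α` and every class has positive
probability, then for any outcome `y` with `y₁ ≥ 1` and `y_j ≤ 0` for `j ≠ 1`, and
any record `d` in class 1, the density ratio equals `e^(2/b) / (1 - α + α e^(2/b))`,
so the upper bound `2/b - log (1 - α + α e^(2/b))` on the PML is attained. -/
theorem pml_laplace_histogram_tight {Ω : Type*} [MeasurableSpace Ω]
    (μ : Measure Ω) [IsProbabilityMeasure μ]
    {𝒟 : Type*} [Fintype 𝒟] [MeasurableSpace 𝒟] [MeasurableSingletonClass 𝒟]
    (k : ℕ) (hk : 2 ≤ k) (h : Fin k → 𝒟 → ℝ)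
    (hbin : ∀ j d, h j d = 0 ∨ h j d = 1) (hsum : ∀ d, ∑ j, h j d = 1)
    (b α : ℝ) (hb : 0 < b) (hα : 0 < α) (hαk : α ≤ 1 / k)
    (D1 : Ω → 𝒟) (hmeas : Measurable D1)
    (hα1 : (μ {ω | h ⟨0, by omega⟩ (D1 ω) = 1}).toReal = α)
    (hpos : ∀ j, 0 < (μ {ω | h j (D1 ω) = 1}).toReal)
    (y : Fin k → ℝ) (hy1 : 1 ≤ y ⟨0, by omega⟩)
    (hyj : ∀ j : Fin k, j ≠ ⟨0, by omega⟩ → y j ≤ 0)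
    (d : 𝒟) (hd : h ⟨0, by omega⟩ d = 1) :
    (∏ j, (1 / (2 * b)) * Real.exp (-(1 / b) * |y j - h j d|)) /
        (∫ ω, ∏ j, (1 / (2 * b)) * Real.exp (-(1 / b) * |y j - h j (D1 ω)|) ∂μ) =
      Real.exp (2 / b) / (1 - α + α * Real.exp (2 / b)) ∧
    Real.log ((∏ j, (1 / (2 * b)) * Real.exp (-(1 / b) * |y j - h j d|)) /
        ∫ ω, ∏ j, (1 / (2 * b)) * Real.exp (-(1 / b) * |y j - h j (D1 ω)|) ∂μ) =
      2 / b - Real.log (1 - α + α * Real.exp (2 / b)) := by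
  set z : Fin k := ⟨0, by omega⟩ with hz
  obtain ⟨K, hK, hprod⟩ : ∃ K : ℝ, 0 < K ∧ ∀ e : 𝒟,
      ∏ j, (1 / (2 * b)) * Real.exp (-(1 / b) * |y j - h j e|) =
        K * (1 + h z e * (Real.exp (2 / b) - 1)) := by
    refine ⟨(1 / (2 * b)) ^ k *
      Real.exp (-(1 / b) * (1 + ∑ j, if j = z then y j else - y j)), by positivity, ?_⟩
    intro e
    have habs : ∀ j, |y j - h j e| =
        h j e + (if j = z then y j else - y j) - (if j = z then 2 * h j e else 0) := by
      intro j
      by_cases hj : j = z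
      · subst hj
        simp only [if_true]
        rw [abs_of_nonneg]
        · ring
        · rcases hbin z e with h0 | h0 <;> rw [h0] <;> linarith
      · have := hyj j hj
        simp only [hj, if_false]
        rw [abs_of_nonpos]
        · ring
        · rcases hbin j e with h0 | h0 <;> rw [h0] <;> linarith
    have hs : ∑ j, |y j - h j e| =
        1 + (∑ j, if j = z then y j else - y j) - 2 * h z e := by
      simp_rw [habs]
      rw [Finset.sum_sub_distrib, Finset.sum_add_distrib, hsum]
      simp
    rw [Finset.prod_mul_distrib, ← Real.exp_sum, ← Finset.mul_sum, hs, mul_assoc]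
    simp only [Finset.prod_const, Finset.card_univ, Fintype.card_fin]
    congr 1
    rcases hbin z e with h0 | h0
    · rw [h0]; simp
    · rw [h0, mul_sub, sub_eq_add_neg, Real.exp_add]
      congr 1
      rw [one_mul, add_sub_cancel]
      congr 1
      ring
  have hms : MeasurableSet {ω | h z (D1 ω) = 1} :=
    hmeas (Set.toFinite {e | h z e = 1}).measurableSet
  have hind : (fun ω => h z (D1 ω)) = Set.indicator {ω | h z (D1 ω) = 1} (fun _ => (1 : ℝ)) := by
    funext ω
    rcases hbin z (D1 ω) with h0 | h0 <;> simp [Set.indicator, h0]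
  have hint : Integrable (fun ω => h z (D1 ω)) μ := by
    rw [hind]
    exact (integrable_const 1).indicator hms
  have hI : ∫ ω, h z (D1 ω) ∂μ = α := by
    rw [hind, integral_indicator hms]
    simpa [Measure.real] using hα1
  have hq : ∫ ω, ∏ j, (1 / (2 * b)) * Real.exp (-(1 / b) * |y j - h j (D1 ω)|) ∂μ =
      K * (1 - α + α * Real.exp (2 / b)) := by
    simp_rw [hprod]
    rw [integral_const_mul, integral_add (integrable_const _) (hint.mul_const _),
      integral_mul_const, hI]
    simp only [integral_const, probReal_univ, smul_eq_mul]
    ring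
  have hE : 1 < Real.exp (2 / b) := Real.one_lt_exp_iff.mpr (by positivity)
  have hden : 0 < 1 - α + α * Real.exp (2 / b) := by nlinarith
  have hmain : (∏ j, (1 / (2 * b)) * Real.exp (-(1 / b) * |y j - h j d|)) /
        (∫ ω, ∏ j, (1 / (2 * b)) * Real.exp (-(1 / b) * |y j - h j (D1 ω)|) ∂μ) =
      Real.exp (2 / b) / (1 - α + α * Real.exp (2 / b)) := by
    rw [hq, hprod, hd, one_mul, add_sub_cancel, mul_div_mul_left _ _ hK.ne']
  refine ⟨hmain, ?_⟩
  rw [hmain, Real.log_div (Real.exp_pos _).ne' hden.ne', Real.log_exp]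
end
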